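/- arXiv:2012.15736 — 2 statements merged into one kernel-verified Lean document; each statement's English description precedes it below -/
import Mathlib

section
/- Let k be a perfect field, let A be a reduced commutative k-algebra, and let K/k be an arbitrary field extension. Then K ⊗_k A is a reduced ring (i.e. A is geometrically reduced over k). -/
open scoped TensorProduct

/-!
Over a perfect field `k`, a finitely generated field extension `K` has a transcendence basis `s`
such that `K` is separable algebraic over `k(s)`. If `A` is reduced, then so is the polynomial ring
`k[s] ⊗ A`, hence also its localization `k(s) ⊗ A`, and finally `K ⊗ A`, which is obtained from it
by an unramified base change: its reducedness can be tested over the residue fields of `k(s) ⊗ A`,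
and unramified algebras over a field are reduced. For an arbitrary reduced `k`-algebra `B` in place
of `K`, one may take `B` finitely generated and test over its residue fields, which are finitely
generated field extensions of `k`.
-/

section BaseChange

variable {R : Type*} [CommRing R]

section Module

variable {M N : Type*} [AddCommGroup M] [Module R M] [AddCommGroup N] [Module R N]

lemma equivFinsuppOfBasisLeft_lTensor_apply {κ P : Type*} [DecidableEq κ] [AddCommGroup P]
    [Module R P] (b : Module.Basis κ R M) (f : N →ₗ[R] P) (x : M ⊗[R] N) (j : κ) :
    TensorProduct.equivFinsuppOfBasisLeft b (f.lTensor M x) j =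
      f (TensorProduct.equivFinsuppOfBasisLeft b x j) := by
  induction x with
  | zero => simp
  | add x y hx hy => simp [hx, hy]
  | tmul m n => simp

lemma eq_zero_of_forall_lTensor_eq_zero [Module.Free R M] {ι : Type*} {P : ι → Type*}
    [∀ i, AddCommGroup (P i)] [∀ i, Module R (P i)] (f : ∀ i, N →ₗ[R] P i)
    (hf : ∀ y, (∀ i, f i y = 0) → y = 0) {x : M ⊗[R] N} (hx : ∀ i, (f i).lTensor M x = 0) :
    x = 0 := by
  classical
  let coordinates := TensorProduct.equivFinsuppOfBasisLeft (N := N) (Module.Free.chooseBasis R M)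
  refine coordinates.map_eq_zero_iff.mp (Finsupp.ext fun j ↦ hf _ fun i ↦ ?_)
  rw [← equivFinsuppOfBasisLeft_lTensor_apply, hx i, map_zero, Finsupp.zero_apply]

end Module

variable {A B : Type*} [CommRing A] [Algebra R A] [CommRing B] [Algebra R B]

lemma isReduced_tensorProduct_comm : IsReduced (A ⊗[R] B) ↔ IsReduced (B ⊗[R] A) :=
  ⟨fun _ ↦ isReduced_of_injective _ (Algebra.TensorProduct.comm R B A).injective,
    fun _ ↦ isReduced_of_injective _ (Algebra.TensorProduct.comm R A B).injective⟩

lemma isReduced_tensorProduct_of_forall_residueField [Module.Free R B] [IsReduced A]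
    (h : ∀ (p : Ideal A) [p.IsPrime], IsReduced (B ⊗[R] p.ResidueField)) :
    IsReduced (B ⊗[R] A) := by
  let toResidueField (p : PrimeSpectrum A) := IsScalarTower.toAlgHom R A p.asIdeal.ResidueField
  refine ⟨fun x hx ↦ eq_zero_of_forall_lTensor_eq_zero
    (fun p ↦ (toResidueField p).toLinearMap) (fun a ha ↦ ?_) fun p ↦ ?_⟩
  · refine (nilpotent_iff_mem_prime.mpr fun p hp ↦ ?_).eq_zero
    exact Ideal.algebraMap_residueField_eq_zero.mp (ha ⟨p, hp⟩)
  · exact (hx.map (Algebra.TensorProduct.map (AlgHom.id R B) (toResidueField p))).eq_zero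

lemma isReduced_tensorProduct_of_formallyUnramified [Module.Free R B] [Algebra.EssFiniteType R B]
    [Algebra.FormallyUnramified R B] [IsReduced A] : IsReduced (B ⊗[R] A) :=
  isReduced_tensorProduct_of_forall_residueField fun p _ ↦
    isReduced_tensorProduct_comm.mp <|
      Algebra.FormallyUnramified.isReduced_of_field p.ResidueField (p.ResidueField ⊗[R] B)

lemma isReduced_tensorProduct_of_isLocalization (M : Submonoid R) [IsLocalization M B]
    [IsReduced A] : IsReduced (B ⊗[R] A) :=
  let N := Algebra.algebraMapSubmonoid A M
  isReduced_tensorProduct_comm.mp <|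
    isReduced_of_injective _ (IsLocalization.algEquiv N (A ⊗[R] B) (Localization N)).injective

lemma isReduced_tensorProduct_mvPolynomial (σ : Type*) [IsReduced A] :
    IsReduced (MvPolynomial σ R ⊗[R] A) :=
  isReduced_tensorProduct_comm.mp <|
    isReduced_of_injective _ (MvPolynomial.algebraTensorAlgEquiv R A).injective

lemma isReduced_tensorProduct_of_isScalarTower [Algebra A B] [IsScalarTower R A B]
    {C : Type*} [CommRing C] [Algebra R C] [IsReduced (B ⊗[A] (A ⊗[R] C))] :
    IsReduced (B ⊗[R] C) :=
  isReduced_of_injective _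
    (Algebra.TensorProduct.cancelBaseChange R A A B C).symm.injective

end BaseChange

section Field

variable {k K A : Type*} [Field k] [Field K] [Algebra k K] [CommRing A] [Algebra k A] [IsReduced A]

open scoped IntermediateField.algebraAdjoinAdjoin in
lemma isReduced_adjoin_tensorProduct {ι : Type*} {v : ι → K}
    (hv : AlgebraicIndependent k v) :
    IsReduced (IntermediateField.adjoin k (Set.range v) ⊗[k] A) := by
  let polynomials := Algebra.adjoin k (Set.range v)
  have : IsReduced (polynomials ⊗[k] A) :=
    have := isReduced_tensorProduct_mvPolynomial (R := k) (A := A) ι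
    isReduced_of_injective _
      (Algebra.TensorProduct.congr hv.aevalEquiv.symm (AlgEquiv.refl (A₁ := A))).injective
  have : IsReduced (IntermediateField.adjoin k (Set.range v) ⊗[polynomials] (polynomials ⊗[k] A)) :=
    isReduced_tensorProduct_of_isLocalization (nonZeroDivisors polynomials)
  exact isReduced_tensorProduct_of_isScalarTower (A := polynomials)

lemma isReduced_tensorProduct_of_essFiniteType [PerfectField k] [Algebra.EssFiniteType k K] :
    IsReduced (K ⊗[k] A) := by
  obtain ⟨s, hs, _⟩ := exists_isTranscendenceBasis_and_isSeparable_of_perfectField k K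
  let E := IntermediateField.adjoin k (s : Set K)
  have : IsReduced (E ⊗[k] A) := by
    have := isReduced_adjoin_tensorProduct (A := A) hs.1
    rwa [show Set.range ((↑) : s → K) = s from Subtype.range_coe] at this
  have : Algebra.EssFiniteType E K := .of_comp k E K
  have : Algebra.FormallyUnramified E K := .of_isSeparable E K
  have := isReduced_tensorProduct_of_formallyUnramified (R := E) (A := E ⊗[k] A) (B := K)
  exact isReduced_tensorProduct_of_isScalarTower (A := E)

end Field

theorem tensorProduct_isReduced_of_perfectField_general
    (k B A : Type*) [Field k] [PerfectField k] [CommRing B] [Algebra k B] [IsReduced B]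
    [CommRing A] [Algebra k A] [IsReduced A] :
    IsReduced (B ⊗[k] A) := by
  refine IsReduced.tensorProduct_of_flat_of_forall_fg fun C hC ↦ ?_
  have : Algebra.FiniteType k C := C.fg_iff_finiteType.mp hC
  have : IsReduced C := isReduced_of_injective C.val Subtype.val_injective
  refine isReduced_tensorProduct_of_forall_residueField fun p _ ↦ ?_
  have : Algebra.EssFiniteType k p.ResidueField := .comp k C p.ResidueField
  exact isReduced_tensorProduct_comm.mp isReduced_tensorProduct_of_essFiniteType

/-- If `k` is a perfect field, `A` a reduced commutative `k`-algebra and `K/k` an arbitrary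
field extension, then `K ⊗[k] A` is a reduced ring; that is, `A` is geometrically reduced
over `k`. -/
theorem tensorProduct_isReduced_of_perfectField
    (k K A : Type*) [Field k] [PerfectField k] [Field K] [Algebra k K]
    [CommRing A] [Algebra k A] [IsReduced A] :
    IsReduced (K ⊗[k] A) :=
  tensorProduct_isReduced_of_perfectField_general k K A
end

section
/- (Cartier's theorem, affine case) Let k be a field of characteristic zero and let A be a finitely generated commutative k-algebra equipped with the structure of a Hopf algebra over k (so that Spec A is an affine group scheme of finite type over k). Then A is a reduced ring. -/
/-! For a point derivation `d` of `A` at the identity with values in `V`, the map `(id ⊗ d) ∘ Δ` is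
an invariant derivation `A → A ⊗ V`. Let `I` be the augmentation ideal, take for `d` the projection
of `A` onto `I/I²`, and compose with a linear section of `I → I/I²`: this gives a derivation `E` of
`A` into `I` which is the identity on `I/I²`, hence multiplication by `n` on `Iⁿ/Iⁿ⁺¹`. In
characteristic zero derivations preserve nilpotent elements, so `E` maps the nilradical `N` into
`N I`. If `N ⊆ Iⁿ`, comparing `E a ∈ Iⁿ⁺¹` with `E a ≡ n a` modulo `Iⁿ⁺¹` gives `N ⊆ Iⁿ⁺¹`.

Over an algebraically closed field every maximal ideal is a translate of `I`, so that a nilpotent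
element lies in all powers of all maximal ideals and vanishes by Krull's intersection theorem. -/

open TensorProduct WithConv

section NilpotentElements

theorem pow_mul_derivation_mul_sq_eq_zero {R A : Type*} [CommSemiring R] [CommRing A] [Algebra R A]
    [IsAddTorsionFree A] (D : Derivation R A A) {a c : A} {n : ℕ} (h : a ^ (n + 1) * c = 0) :
    a ^ n * (D a * c ^ 2) = 0 := by
  have hD : a ^ (n + 1) * D c + c * ((n + 1) • (a ^ n * D a)) = 0 := by
    simpa using congrArg D h
  have hn : (n + 1) • (a ^ n * (D a * c ^ 2)) = 0 := by
    rw [nsmul_eq_mul] at hD ⊢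
    linear_combination c * hD - D c * h
  exact (nsmul_eq_zero_iff_right n.succ_ne_zero).mp hn

theorem isNilpotent_derivation_apply {R A : Type*} [CommSemiring R] [CommRing A] [Algebra R A]
    [IsAddTorsionFree A] (D : Derivation R A A) {a : A} (ha : IsNilpotent a) :
    IsNilpotent (D a) := by
  obtain ⟨n, hn⟩ := ha
  suffices ∀ e, a ^ n * D a ^ e = 0 → IsNilpotent (D a) from this 0 (by simp [hn])
  clear hn
  induction n with
  | zero => exact fun e he => ⟨e, by simpa using he⟩
  | succ n ih =>
    intro e he
    refine ih (e * 2 + 1) ?_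
    rw [pow_succ', pow_mul]
    exact pow_mul_derivation_mul_sq_eq_zero D he

theorem derivation_apply_mem_nilradical_smul_top {R A M : Type*} [CommSemiring R] [CommRing A]
    [Algebra R A] [IsAddTorsionFree A] [AddCommGroup M] [Module R M] [Module A M]
    [IsScalarTower R A M] [Module.Projective A M] (D : Derivation R A M) {a : A}
    (ha : a ∈ nilradical A) : D a ∈ nilradical A • (⊤ : Submodule A M) := by
  obtain ⟨s, hs⟩ := Module.projective_def.mp ‹Module.Projective A M›
  have hcoord (m : M) : s (D a) m ∈ nilradical A :=
    isNilpotent_derivation_apply ((Finsupp.lapply m ∘ₗ s).compDer D) ha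
  rw [← hs (D a), Finsupp.linearCombination_apply]
  exact Submodule.sum_mem _ fun m _ => Submodule.smul_mem_smul (hcoord m) trivial

end NilpotentElements

theorem derivation_sub_nsmul_mem_pow_succ {R A : Type*} [CommSemiring R] [CommRing A] [Algebra R A]
    (D : Derivation R A A) {I : Ideal A} (hD : ∀ y ∈ I, D y - y ∈ I ^ 2) (n : ℕ) {y : A}
    (hy : y ∈ I ^ (n + 1)) : D y - (n + 1) • y ∈ I ^ (n + 2) := by
  induction n generalizing y with
  | zero => simpa using hD y (by simpa using hy)
  | succ n ih =>
    rw [pow_succ] at hy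
    induction hy using Submodule.mul_induction_on' with
    | mem_mul_mem a ha b hb =>
      have hleft : (D a - (n + 1) • a) * b ∈ I ^ (n + 1 + 2) := by
        rw [add_right_comm, pow_succ]
        exact Ideal.mul_mem_mul (ih ha) hb
      have hright : a * (D b - b) ∈ I ^ (n + 1 + 2) := by
        rw [pow_add I (n + 1) 2]
        exact Ideal.mul_mem_mul ha (hD b hb)
      convert add_mem hleft hright using 1
      rw [D.leibniz, smul_eq_mul, smul_eq_mul]
      simp only [nsmul_eq_mul]
      push_cast
      ring
    | add x _ y _ hx hy =>
      convert add_mem hx hy using 1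
      rw [map_add, smul_add]
      abel

theorem liftBaseChange_mem_mul {R A V : Type*} [CommSemiring R] [CommSemiring A] [Algebra R A]
    [AddCommMonoid V] [Module R V] {I J : Ideal A} (f : V →ₗ[R] A) (hf : ∀ v, f v ∈ I)
    {x : A ⊗[R] V} (hx : x ∈ J • (⊤ : Submodule A (A ⊗[R] V))) :
    f.liftBaseChange A x ∈ J * I := by
  have hrange : (f.liftBaseChange A).range ≤ I := by
    rw [LinearMap.range_liftBaseChange, Submodule.span_le]
    rintro _ ⟨v, rfl⟩
    exact hf v
  have hmap := Submodule.mem_map_of_mem (f := f.liftBaseChange A) hx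
  rw [Submodule.map_smul'', Submodule.map_top] at hmap
  exact Submodule.smul_mono le_rfl hrange hmap

section Cotangent

variable {R A : Type*} [CommRing R] [CommRing A] [Algebra R A]

theorem sub_algebraMap_mem_ker (ε : A →ₐ[R] R) (a : A) :
    a - algebraMap R A (ε a) ∈ RingHom.ker ε := by
  simp [RingHom.mem_ker]

theorem smul_cotangent_ker (ε : A →ₐ[R] R) (a : A) (v : (RingHom.ker ε).Cotangent) :
    a • v = ε a • v := by
  rw [← algebraMap_smul A (ε a) v, ← sub_eq_zero, ← sub_smul]
  exact Ideal.Cotangent.smul_eq_zero_of_mem (sub_algebraMap_mem_ker ε a) v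

/-- The differential `a ↦ a - ε a` modulo `(ker ε)²` at the point `ε`, the universal point
derivation there. -/
noncomputable def cotangentDerivation (ε : A →ₐ[R] R) :
    Derivation R A (RingHom.ker ε).Cotangent :=
  Derivation.mk'
    ((RingHom.ker ε).toCotangent.restrictScalars R ∘ₗ
      (LinearMap.id - Algebra.linearMap R A ∘ₗ ε.toLinearMap).codRestrict
        ((RingHom.ker ε).restrictScalars R) (sub_algebraMap_mem_ker ε))
    fun a b => by
      change (RingHom.ker ε).toCotangent _ =
        a • (RingHom.ker ε).toCotangent _ + b • (RingHom.ker ε).toCotangent _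
      rw [← map_smul, ← map_smul, ← map_add, Ideal.toCotangent_eq, sq]
      convert neg_mem (Ideal.mul_mem_mul (sub_algebraMap_mem_ker ε a)
        (sub_algebraMap_mem_ker ε b)) using 1
      change a * b - algebraMap R A (ε (a * b)) -
        (a * (b - algebraMap R A (ε b)) + b * (a - algebraMap R A (ε a))) = _
      rw [map_mul, map_mul]
      ring

theorem cotangentDerivation_apply (ε : A →ₐ[R] R) (a : A) :
    cotangentDerivation ε a =
      (RingHom.ker ε).toCotangent ⟨a - algebraMap R A (ε a), sub_algebraMap_mem_ker ε a⟩ :=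
  rfl

theorem cotangentDerivation_apply_of_mem (ε : A →ₐ[R] R) {y : A} (hy : y ∈ RingHom.ker ε) :
    cotangentDerivation ε y = (RingHom.ker ε).toCotangent ⟨y, hy⟩ := by
  simp [cotangentDerivation_apply, RingHom.mem_ker.mp hy]

end Cotangent

/-- The augmentation ideal of a bialgebra, that is, the ideal of the identity element. -/
abbrev augmentationIdeal (R A : Type*) [CommRing R] [CommRing A] [Bialgebra R A] : Ideal A :=
  RingHom.ker (Bialgebra.counitAlgHom R A)

section InvariantDerivation

variable {R A V : Type*} [CommRing R] [CommRing A] [Bialgebra R A] [AddCommGroup V] [Module R V]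
  [Module A V]

theorem lTensor_derivation_mul (d : Derivation R A V)
    (hV : ∀ (a : A) (v : V), a • v = Coalgebra.counit (R := R) a • v) (s t : A ⊗[R] A) :
    d.toLinearMap.lTensor A (s * t) =
      TensorProduct.rid R A (Coalgebra.counit.lTensor A s) • d.toLinearMap.lTensor A t +
        TensorProduct.rid R A (Coalgebra.counit.lTensor A t) • d.toLinearMap.lTensor A s := by
  induction s with
  | zero => simp
  | add x y hx hy => simp only [add_mul, map_add, hx, hy, add_smul, smul_add]; abel
  | tmul a b =>
    induction t with
    | zero => simp
    | add x y hx hy => simp only [mul_add, map_add, hx, hy, add_smul, smul_add]; abel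
    | tmul a' b' =>
      simp [hV, smul_tmul', tmul_add, mul_comm a a']

/-- The invariant derivation `(id ⊗ d) ∘ Δ` extending a point derivation `d` at the identity. Point
derivations are encoded as derivations into an `A`-module on which `A` acts through the counit. -/
noncomputable def invariantDerivation (d : Derivation R A V)
    (hV : ∀ (a : A) (v : V), a • v = Coalgebra.counit (R := R) a • v) :
    Derivation R A (A ⊗[R] V) :=
  Derivation.mk' (d.toLinearMap.lTensor A ∘ₗ Coalgebra.comul) fun a b => by
    simp [lTensor_derivation_mul d hV, Coalgebra.lTensor_counit_comul]

theorem invariantDerivation_sub_one_tmul_mem (d : Derivation R A V)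
    (hV : ∀ (a : A) (v : V), a • v = Coalgebra.counit (R := R) a • v) (a : A) :
    invariantDerivation d hV a - 1 ⊗ₜ d a ∈
      augmentationIdeal R A • (⊤ : Submodule A (A ⊗[R] V)) := by
  have htensor (t : A ⊗[R] A) : d.toLinearMap.lTensor A t -
      1 ⊗ₜ d (TensorProduct.lid R A (Coalgebra.counit.rTensor A t)) ∈
        augmentationIdeal R A • (⊤ : Submodule A (A ⊗[R] V)) := by
    induction t with
    | zero => simp
    | add x y hx hy =>
      convert add_mem hx hy using 1
      simp only [map_add, tmul_add]
      abel
    | tmul x y =>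
      convert Submodule.smul_mem_smul (sub_algebraMap_mem_ker (Bialgebra.counitAlgHom R A) x)
        (Submodule.mem_top (x := (1 : A) ⊗ₜ[R] d y)) using 1
      simp [sub_smul, smul_tmul']
  simpa [invariantDerivation] using htensor (Coalgebra.comul a)

end InvariantDerivation

section EulerDerivation

variable {R A : Type*} [CommRing R] [CommRing A] [Bialgebra R A]

/-- The Euler derivation attached to a linear map `σ : I/I² → I`, where `I` is the augmentation
ideal. When `σ` is a section of the projection, it plays the role of the vector field `∑ xᵢ ∂/∂xᵢ`
in local coordinates `xᵢ` at the identity. -/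
noncomputable def eulerDerivation
    (σ : (augmentationIdeal R A).Cotangent →ₗ[R] augmentationIdeal R A) : Derivation R A A :=
  (((augmentationIdeal R A).subtype.restrictScalars R ∘ₗ σ).liftBaseChange A).compDer
    (invariantDerivation (cotangentDerivation (Bialgebra.counitAlgHom R A))
      (smul_cotangent_ker (Bialgebra.counitAlgHom R A)))

theorem eulerDerivation_sub_self_mem_sq
    {σ : (augmentationIdeal R A).Cotangent →ₗ[R] augmentationIdeal R A}
    (hσ : ∀ v, (augmentationIdeal R A).toCotangent (σ v) = v) {y : A}
    (hy : y ∈ augmentationIdeal R A) :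
    eulerDerivation σ y - y ∈ augmentationIdeal R A ^ 2 := by
  have hvalue : eulerDerivation σ y - σ ((augmentationIdeal R A).toCotangent ⟨y, hy⟩) ∈
      augmentationIdeal R A ^ 2 := by
    have h := liftBaseChange_mem_mul ((augmentationIdeal R A).subtype.restrictScalars R ∘ₗ σ)
      (fun v => (σ v).2) (invariantDerivation_sub_one_tmul_mem
        (cotangentDerivation (Bialgebra.counitAlgHom R A)) (smul_cotangent_ker _) y)
    rwa [map_sub, LinearMap.liftBaseChange_one_tmul, cotangentDerivation_apply_of_mem _ hy,
      ← sq] at h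
  have hsection : (σ ((augmentationIdeal R A).toCotangent ⟨y, hy⟩) : A) - y ∈
      augmentationIdeal R A ^ 2 :=
    (Ideal.toCotangent_eq (augmentationIdeal R A)).mp (hσ _)
  simpa using add_mem hvalue hsection

theorem eulerDerivation_apply_mem_nilradical_mul [IsAddTorsionFree A]
    [Module.Projective R (augmentationIdeal R A).Cotangent]
    (σ : (augmentationIdeal R A).Cotangent →ₗ[R] augmentationIdeal R A) {a : A}
    (ha : a ∈ nilradical A) : eulerDerivation σ a ∈ nilradical A * augmentationIdeal R A :=
  liftBaseChange_mem_mul _ (fun v => (σ v).2) (derivation_apply_mem_nilradical_smul_top _ ha)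

theorem nilradical_le_augmentationIdeal [IsReduced R] : nilradical A ≤ augmentationIdeal R A :=
  fun _ ha => (IsNilpotent.map ha (Bialgebra.counitAlgHom R A)).eq_zero

theorem nilradical_le_augmentationIdeal_pow [IsReduced R] [Algebra ℚ A]
    [Module.Projective R (augmentationIdeal R A).Cotangent] (n : ℕ) :
    nilradical A ≤ augmentationIdeal R A ^ (n + 1) := by
  have : IsAddTorsionFree A := .of_module_rat A
  obtain ⟨σ, hσ⟩ := Module.projective_lifting_property
    ((augmentationIdeal R A).toCotangent.restrictScalars R) LinearMap.id
    (augmentationIdeal R A).toCotangent_surjective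
  induction n with
  | zero => simpa using nilradical_le_augmentationIdeal
  | succ n ih =>
    intro a ha
    have hE : eulerDerivation σ a ∈ augmentationIdeal R A ^ (n + 2) := by
      rw [pow_succ]
      exact Ideal.mul_mono_left ih (eulerDerivation_apply_mem_nilradical_mul σ ha)
    have hEuler : eulerDerivation σ a - (n + 1) • a ∈ augmentationIdeal R A ^ (n + 2) :=
      derivation_sub_nsmul_mem_pow_succ _
        (fun y => eulerDerivation_sub_self_mem_sq (DFunLike.congr_fun hσ)) n (ih ha)
    have hmul : ((n + 1 : ℕ) : ℚ) • a ∈ augmentationIdeal R A ^ (n + 2) := by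
      rw [Nat.cast_smul_eq_nsmul]
      simpa only [sub_sub_cancel] using sub_mem hE hEuler
    rw [← inv_smul_smul₀ (Nat.cast_ne_zero (R := ℚ).mpr n.succ_ne_zero) a]
    exact Submodule.smul_of_tower_mem _ _ hmul

end EulerDerivation

section Translation

variable {R A B : Type*} [CommRing R] [CommRing A] [CommRing B] [Algebra R B]

/-- Right translation `a ↦ ∑ a₁ g(a₂)` by the `R`-point `g`. -/
noncomputable def rightTranslation [Bialgebra R A] (g : WithConv (A →ₐ[R] R)) : A →ₐ[R] A :=
  (toConv (AlgHom.id R A) * toConv ((Algebra.ofId R A).comp g.ofConv)).ofConv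

theorem comp_rightTranslation [Bialgebra R A] (f : A →ₐ[R] B) (g : WithConv (A →ₐ[R] R)) :
    f.comp (rightTranslation g) =
      (toConv f * toConv ((Algebra.ofId R B).comp g.ofConv)).ofConv := by
  have hg : f.comp ((Algebra.ofId R A).comp g.ofConv) = (Algebra.ofId R B).comp g.ofConv := by
    rw [← AlgHom.comp_assoc]
    congr 1
    exact Subsingleton.elim _ _
  rw [rightTranslation, AlgHom.comp_convMul_distrib, ofConv_toConv, ofConv_toConv,
    AlgHom.comp_id, hg]

theorem rightTranslation_comp [Bialgebra R A] (g h : WithConv (A →ₐ[R] R)) :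
    (rightTranslation g).comp (rightTranslation h) = rightTranslation (g * h) := by
  rw [comp_rightTranslation, rightTranslation, rightTranslation, AlgHom.comp_convMul_distrib,
    toConv_ofConv, toConv_ofConv, mul_assoc]

theorem rightTranslation_one [Bialgebra R A] :
    rightTranslation (1 : WithConv (A →ₐ[R] R)) = AlgHom.id R A :=
  congrArg ofConv (mul_one (toConv (AlgHom.id R A)))

theorem point_comp_rightTranslation [Bialgebra R A] (g h : WithConv (A →ₐ[R] R)) :
    g.ofConv.comp (rightTranslation h) = (g * h).ofConv := by
  rw [comp_rightTranslation]
  rfl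

theorem map_rightTranslation_inv_le_ker [HopfAlgebra R A] (g : WithConv (A →ₐ[R] R)) :
    (augmentationIdeal R A).map (rightTranslation g⁻¹) ≤ RingHom.ker g.ofConv := by
  rw [Ideal.map_le_iff_le_comap]
  intro a ha
  have h : g.ofConv.comp (rightTranslation g⁻¹) = Bialgebra.counitAlgHom R A := by
    rw [point_comp_rightTranslation, mul_inv_cancel]
    rfl
  exact (DFunLike.congr_fun h a).trans ha

theorem nilradical_le_ker_point_pow [HopfAlgebra R A] [IsReduced R] [Algebra ℚ A]
    [Module.Projective R (augmentationIdeal R A).Cotangent] (g : A →ₐ[R] R) (n : ℕ) :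
    nilradical A ≤ RingHom.ker g ^ (n + 1) := by
  intro a ha
  have htranslate : rightTranslation (toConv g) a ∈ augmentationIdeal R A ^ (n + 1) :=
    nilradical_le_augmentationIdeal_pow n (IsNilpotent.map ha (rightTranslation (toConv g)))
  have hback : rightTranslation (toConv g)⁻¹ (rightTranslation (toConv g) a) = a := by
    rw [← AlgHom.comp_apply, rightTranslation_comp, inv_mul_cancel, rightTranslation_one,
      AlgHom.id_apply]
  rw [← hback]
  refine Ideal.pow_right_mono (map_rightTranslation_inv_le_ker (toConv g)) _ ?_
  rw [← Ideal.map_pow]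
  exact Ideal.mem_map_of_mem _ htranslate

end Translation

theorem eq_zero_of_forall_mem_maximal_pow {A : Type*} [CommRing A] [IsNoetherianRing A] {a : A}
    (h : ∀ M : Ideal A, M.IsMaximal → ∀ n, a ∈ M ^ n) : a = 0 := by
  by_contra ha
  obtain ⟨M, hM, haM⟩ :=
    Ideal.exists_le_maximal _ (mt (Ideal.torsionOf_eq_top_iff (R := A) a).mp ha)
  obtain ⟨r, hr⟩ : ∃ r : M, (r : A) • a = a :=
    (Ideal.mem_iInf_smul_pow_eq_bot_iff M a).mp (by simpa [Submodule.mem_iInf] using h M hM)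
  have hr' : 1 - (r : A) ∈ M :=
    haM (by rw [Ideal.mem_torsionOf_iff, sub_smul, one_smul, hr, sub_self])
  exact hM.ne_top ((Ideal.eq_top_iff_one M).mpr (by simpa using add_mem hr' r.2))

theorem exists_algHom_ker_eq {k A : Type*} [Field k] [IsAlgClosed k] [CommRing A] [Algebra k A]
    [Algebra.FiniteType k A] (M : Ideal A) [M.IsMaximal] :
    ∃ g : A →ₐ[k] k, RingHom.ker g = M := by
  let := Ideal.Quotient.field M
  have : Module.Finite k (A ⧸ M) := finite_of_finite_type_of_isJacobsonRing k (A ⧸ M)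
  let lift : (A ⧸ M) →ₐ[k] k := IsAlgClosed.lift
  refine ⟨lift.comp (Ideal.Quotient.mkₐ k M), Ideal.ext fun a => ?_⟩
  simp [RingHom.mem_ker, Ideal.Quotient.eq_zero_iff_mem]

theorem isReduced_hopfAlgebra_of_isAlgClosed {k A : Type*} [Field k] [IsAlgClosed k] [CharZero k]
    [CommRing A] [HopfAlgebra k A] [Algebra.FiniteType k A] : IsReduced A := by
  have : IsNoetherianRing A := Algebra.FiniteType.isNoetherianRing k A
  let : Algebra ℚ A := Algebra.compHom A (algebraMap ℚ k)
  refine ⟨fun a ha => eq_zero_of_forall_mem_maximal_pow fun M _ n => ?_⟩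
  obtain ⟨g, rfl⟩ := exists_algHom_ker_eq (k := k) M
  exact Ideal.pow_le_pow_right n.le_succ (nilradical_le_ker_point_pow g n ha)

theorem isGeometricallyReduced_hopfAlgebra {k A : Type*} [Field k] [CharZero k] [CommRing A]
    [HopfAlgebra k A] [Algebra.FiniteType k A] : Algebra.IsGeometricallyReduced k A :=
  have : CharZero (AlgebraicClosure k) :=
    charZero_of_injective_algebraMap (algebraMap k (AlgebraicClosure k)).injective
  (Algebra.isGeometricallyReduced_field_iff k A).mpr
    (isReduced_hopfAlgebra_of_isAlgClosed (k := AlgebraicClosure k))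

/-- (Cartier's theorem, affine case) Let `k` be a field of characteristic zero and let `A` be
a finitely generated commutative `k`-algebra carrying the structure of a Hopf algebra over
`k` (so `Spec A` is an affine group scheme of finite type over `k`).  Then `A` is reduced. -/
theorem cartier_hopfAlgebra_isReduced
    (k A : Type*) [Field k] [CharZero k] [CommRing A] [HopfAlgebra k A]
    (hA : Algebra.FiniteType k A) :
    IsReduced A := by
  have : Algebra.IsGeometricallyReduced k A := isGeometricallyReduced_hopfAlgebra
  exact Algebra.isReduced_of_isGeometricallyReduced k
end
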